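/- Let Φ : ℝⁿ → ℝ be a lower semi-continuous function and let a = (a₁,…,aₙ), b = (b₁,…,bₙ) be vectors with all positive entries. Fix x ∈ ℝⁿ and t > 0, and define V(x,t) := inf over u ∈ ∏ᵢ [xᵢ−aᵢt, xᵢ+bᵢt] of {Σᵢ V(xᵢ,t; uᵢ,aᵢ,bᵢ) + Φ(u)}. Then: (i) this infimum is attained at some u* ∈ ∏ᵢ [xᵢ−aᵢt, xᵢ+bᵢt]; (ii) for any such minimizer u*, the trajectory s ↦ (γ(s; x₁,t,u₁*,a₁,b₁), …, γ(s; xₙ,t,uₙ*,aₙ,bₙ)) minimizes the cost ∫₀ᵗ ‖y(s)‖²/2 ds + Φ(y(0)) over all Lipschitz functions y : [0,t] → ℝⁿ with y(t) = x and y'(s) ∈ ∏ᵢ [−bᵢ, aᵢ] for almost every s ∈ (0,t), where ‖·‖ is the Euclidean norm, and the minimal cost equals V(x,t); (iii) if moreover Φ is convex, this optimal trajectory is unique. -/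

import Mathlib

/-!
Write `L s = max (u - b s) (x - a (t - s))` and `U s = min (u + a s) (x + b (t - s))`. A trajectory
with slopes in `[-b, a]` that goes from `u` at time `0` to `x` at time `t` lies between `L` and `U`,
and for `u` in the box one has `L ≤ U` on `[0, t]`. Projecting `0` onto `[L s, U s]` therefore gives
a trajectory `clampTraj` which is admissible (a lattice combination of admissible affine pieces) and
which has the smallest absolute value *pointwise in `s`* among all competitors. The formula for
`γ` is this projection (`gammaFn_eq_clampTraj`), and `V` is its running cost
(`Vval_eq_integral`, by integrating the affine pieces).

Consequently the objective of the finite-dimensional problem is, on the box, the real number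
`∫₀ᵗ ‖clampTraj‖²/2 + Φ u` (`sumV_eq_integral`). Its first term is continuous in `u`, so the
objective is lower semicontinuous on a compact set and a minimizer exists. Any admissible `y` costs
at least the objective at `y 0`, which gives optimality. For uniqueness with convex `Φ`, the midpoint
of two optimal trajectories is admissible and is cheaper by at least `∫₀ᵗ ‖y - γ‖²/8`, so this integral of a
continuous function vanishes.

Almost-everywhere derivative bounds are handled once and for all by `ctrlFeasibleN_iff`: being
feasible is the same as satisfying the corresponding difference-quotient bounds (the fundamental
theorem of calculus for Lipschitz functions in one direction, Rademacher's theorem in the other).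
-/

open Set MeasureTheory Matrix
open scoped Classical

noncomputable section

/-- The set Ω₁, as a predicate on `(x, t, u)`, for velocity-bound parameters `a, b`. -/
def inOmega1 (a b x t u : ℝ) : Prop :=
  0 ≤ u ∧ 0 ≤ t ∧
    ((t < u / b ∧ u - b * t ≤ x ∧ x ≤ u + a * t) ∨
      (u / b ≤ t ∧ a * t - a * u / b ≤ x ∧ x ≤ u + a * t))

/-- The set Ω₂, as a predicate on `(x, t, u)`, for velocity-bound parameters `a, b`. -/
def inOmega2 (a b x t u : ℝ) : Prop :=
  0 ≤ u ∧ 0 ≤ t ∧ u / b ≤ t ∧ 0 ≤ x ∧ x < a * t - a * u / b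

/-- The set Ω₃, as a predicate on `(x, t, u)`, for velocity-bound parameters `a, b`. -/
def inOmega3 (a b x t u : ℝ) : Prop :=
  0 ≤ u ∧ 0 ≤ t ∧ u / b ≤ t ∧ u - b * t ≤ x ∧ x < 0

/-- The value of `V` on Ω₁. -/
def V1fun (a b x t u : ℝ) : ℝ :=
  u ^ 3 / (6 * b) + x ^ 3 / (6 * a) -
    (1 / (6 * a) + 1 / (6 * b)) * ((a * u + b * x - a * b * t) / (a + b)) ^ 3

/-- The value of `V` on Ω₂. -/
def V2fun (a b x t u : ℝ) : ℝ := u ^ 3 / (6 * b) + x ^ 3 / (6 * a)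

/-- The value of `V` on Ω₃. -/
def V3fun (a b x t u : ℝ) : ℝ := u ^ 3 / (6 * b) - x ^ 3 / (6 * b)

/-- The extended-real value `V(x,t;u,a,b)` for `u ≥ 0`. -/
def Vpos (a b x t u : ℝ) : EReal :=
  if inOmega1 a b x t u then (V1fun a b x t u : EReal)
  else if inOmega2 a b x t u then (V2fun a b x t u : EReal)
  else if inOmega3 a b x t u then (V3fun a b x t u : EReal)
  else ⊤

/-- The extended-real value `V(x,t;u,a,b)`; for `u < 0` it is defined by
`V(x,t;u,a,b) := V(-x,t;-u,b,a)`. -/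
def Vval (a b x t u : ℝ) : EReal :=
  if 0 ≤ u then Vpos a b x t u else Vpos b a (-x) t (-u)

/-- The trajectory formula on Ω₁. -/
def gamma1 (a b x t u s : ℝ) : ℝ :=
  if s < (-x + u + a * t) / (a + b) then u - b * s else a * (s - t) + x

/-- The trajectory formula on Ω₂. -/
def gamma2 (a b x t u s : ℝ) : ℝ :=
  if s < u / b then u - b * s else if s < t - x / a then 0 else a * (s - t) + x

/-- The trajectory formula on Ω₃. -/
def gamma3 (a b x t u s : ℝ) : ℝ :=
  if s < u / b then u - b * s else if s < t - |x| / b then 0 else -b * (s - t) + x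

/-- The optimal trajectory `γ(s;x,t,u,a,b)` for `u ≥ 0`. -/
def gammaPos (a b x t u s : ℝ) : ℝ :=
  if inOmega1 a b x t u then gamma1 a b x t u s
  else if inOmega2 a b x t u then gamma2 a b x t u s
  else if inOmega3 a b x t u then gamma3 a b x t u s
  else 0

/-- The optimal trajectory `γ(s;x,t,u,a,b)`; for `u < 0` it is defined by
`γ(s;x,t,u,a,b) := -γ(s;-x,t,-u,b,a)`. -/
def gammaFn (a b x t u s : ℝ) : ℝ :=
  if 0 ≤ u then gammaPos a b x t u s else -gammaPos b a (-x) t (-u) s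

/-- One-dimensional feasibility: Lipschitz on `[0,t]` with derivative in `[-b,a]`
almost everywhere on `(0,t)`. -/
def ctrlFeasible (a b t : ℝ) (y : ℝ → ℝ) : Prop :=
  (∃ K : NNReal, LipschitzOnWith K y (Set.Icc 0 t)) ∧
    ∀ᵐ s ∂(volume : Measure ℝ), s ∈ Set.Ioo 0 t →
      ∃ d ∈ Set.Icc (-b) a, HasDerivAt y d s


/-- n-dimensional feasibility: Lipschitz on `[0,t]` with derivative in
`∏ᵢ [-bᵢ, aᵢ]` almost everywhere on `(0,t)`. -/
def ctrlFeasibleN {n : ℕ} (a b : Fin n → ℝ) (t : ℝ) (y : ℝ → Fin n → ℝ) : Prop :=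
  (∃ K : NNReal, LipschitzOnWith K y (Set.Icc 0 t)) ∧
    ∀ᵐ s ∂(volume : Measure ℝ), s ∈ Set.Ioo 0 t →
      ∃ d : Fin n → ℝ, HasDerivAt y d s ∧ ∀ i, d i ∈ Set.Icc (-(b i)) (a i)

/-- The box `∏ᵢ [xᵢ - aᵢ t, xᵢ + bᵢ t]`. -/
def boxIcc {n : ℕ} (a b x : Fin n → ℝ) (t : ℝ) : Set (Fin n → ℝ) :=
  Set.univ.pi fun i => Set.Icc (x i - a i * t) (x i + b i * t)

/-- The sum `∑ᵢ V(xᵢ,t;uᵢ,aᵢ,bᵢ)` (in the extended reals). -/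
def sumV {n : ℕ} (a b x : Fin n → ℝ) (t : ℝ) (u : Fin n → ℝ) : EReal :=
  ∑ i, Vval (a i) (b i) (x i) t (u i)

/-- The componentwise optimal trajectory. -/
def gammaVec {n : ℕ} (a b x : Fin n → ℝ) (t : ℝ) (u : Fin n → ℝ) (s : ℝ) : Fin n → ℝ :=
  fun i => gammaFn (a i) (b i) (x i) t (u i) s

/-- The total cost `∫₀ᵗ ‖y(s)‖²/2 ds + Φ(y 0)` (with the Euclidean norm). -/
def costN {n : ℕ} (t : ℝ) (Φ : (Fin n → ℝ) → ℝ) (y : ℝ → Fin n → ℝ) : ℝ :=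
  (∫ s in (0:ℝ)..t, (∑ i, (y s i) ^ 2) / 2) + Φ (y 0)

/-! ### Feasibility as a bound on difference quotients -/

/-- The difference quotients of `f` on `[0, t]` lie in `[-b, a]`. -/
def SlopeBound (a b t : ℝ) (f : ℝ → ℝ) : Prop :=
  ∀ s r, 0 ≤ s → s ≤ r → r ≤ t → -b * (r - s) ≤ f r - f s ∧ f r - f s ≤ a * (r - s)

/-- A Lipschitz function is the integral of its derivative, so the a.e. bounds integrate. -/
lemma ctrlFeasibleN.slopeBound {n : ℕ} {a b : Fin n → ℝ} {t : ℝ} {y : ℝ → Fin n → ℝ}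
    (h : ctrlFeasibleN a b t y) (i : Fin n) : SlopeBound (a i) (b i) t (fun s => y s i) := by
  obtain ⟨⟨K, hK⟩, hd⟩ := h
  intro s r hs hsr hrt
  have hL : LipschitzOnWith K (fun s => y s i) (Set.uIcc s r) := by
    rw [Set.uIcc_of_le hsr]
    have h1 := (LipschitzWith.eval (α := fun _ : Fin n => ℝ) i).comp_lipschitzOnWith
      (hK.mono (Set.Icc_subset_Icc hs hrt))
    rwa [one_mul] at h1
  have hAC := hL.absolutelyContinuousOnInterval
  have hint := hAC.intervalIntegrable_deriv
  have hb : ∀ᵐ σ ∂(volume.restrict (Set.Icc s r)),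
      deriv (fun s => y s i) σ ∈ Set.Icc (-(b i)) (a i) := by
    rw [← MeasureTheory.restrict_Ioo_eq_restrict_Icc, ae_restrict_iff' measurableSet_Ioo]
    filter_upwards [hd] with σ hσ hm
    obtain ⟨d, hd, hdm⟩ := hσ ⟨hs.trans_lt hm.1, hm.2.trans_le hrt⟩
    rw [((hasDerivAt_pi.1 hd) i).deriv]
    exact hdm i
  rw [← hAC.integral_deriv_eq_sub]
  constructor
  · have := intervalIntegral.integral_mono_ae_restrict (μ := volume) hsr
      (intervalIntegrable_const (c := -(b i))) hint (hb.mono fun _ h => h.1)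
    rw [intervalIntegral.integral_const, smul_eq_mul] at this
    linarith
  · have := intervalIntegral.integral_mono_ae_restrict (μ := volume) hsr hint
      (intervalIntegrable_const (c := a i)) (hb.mono fun _ h => h.2)
    rw [intervalIntegral.integral_const, smul_eq_mul] at this
    linarith

/-- Bounded difference quotients make `y` Lipschitz, hence a.e. differentiable, and the derivative is
a limit of difference quotients. -/
lemma ctrlFeasibleN_of_slopeBound {n : ℕ} {a b : Fin n → ℝ} {t : ℝ} {y : ℝ → Fin n → ℝ}
    (ha : ∀ i, 0 < a i) (hb : ∀ i, 0 < b i)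
    (h : ∀ i, SlopeBound (a i) (b i) t (fun s => y s i)) : ctrlFeasibleN a b t y := by
  have hK : LipschitzOnWith (Real.toNNReal (∑ i, (a i + b i))) y (Set.Icc 0 t) := by
    have hnn : 0 ≤ ∑ i, (a i + b i) :=
      Finset.sum_nonneg fun i _ => (add_pos (ha i) (hb i)).le
    have key : ∀ s r, 0 ≤ s → s ≤ r → r ≤ t →
        dist (y r) (y s) ≤ (∑ i, (a i + b i)) * (r - s) := by
      intro s r hs hsr hrt
      have h0 : 0 ≤ r - s := sub_nonneg.2 hsr
      refine (dist_pi_le_iff (mul_nonneg hnn h0)).2 fun i => ?_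
      obtain ⟨h1, h2⟩ := h i s r hs hsr hrt
      have h3 : a i + b i ≤ ∑ i, (a i + b i) :=
        Finset.single_le_sum (f := fun i => a i + b i)
          (fun i _ => (add_pos (ha i) (hb i)).le) (Finset.mem_univ i)
      have h4 := mul_le_mul_of_nonneg_right h3 h0
      have h5 := mul_nonneg (ha i).le h0
      have h6 := mul_nonneg (hb i).le h0
      simp only at h1 h2
      rw [Real.dist_eq, abs_le]
      constructor <;> linarith
    refine LipschitzOnWith.of_dist_le_mul fun p hp q hq => ?_
    rw [Real.coe_toNNReal _ hnn, Real.dist_eq]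
    rcases le_total p q with hpq | hpq
    · rw [dist_comm, abs_sub_comm, abs_of_nonneg (sub_nonneg.2 hpq)]
      exact key p q hp.1 hpq hq.2
    · rw [abs_of_nonneg (sub_nonneg.2 hpq)]
      exact key q p hq.1 hpq hp.2
  refine ⟨⟨_, hK⟩, ?_⟩
  filter_upwards [hK.ae_differentiableWithinAt_of_mem (μ := volume)] with s hs hm
  have hnhds : Set.Icc 0 t ∈ nhds s := Icc_mem_nhds hm.1 hm.2
  have hdiff := ((hs (Set.Ioo_subset_Icc_self hm)).differentiableAt hnhds).hasDerivAt
  refine ⟨_, hdiff, fun i => ?_⟩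
  have hi := hasDerivAt_pi.1 hdiff i
  set d := deriv y s i with hd
  have hev : ∀ᶠ r in nhdsWithin s (Set.Ioi s), slope (fun s => y s i) s r ∈ Set.Icc (-(b i)) (a i) := by
    filter_upwards [self_mem_nhdsWithin, mem_nhdsWithin_of_mem_nhds hnhds] with r hr hr'
    obtain ⟨h1, h2⟩ := h i s r hm.1.le (le_of_lt hr) hr'.2
    have h0 : 0 < r - s := sub_pos.2 hr
    rw [slope_def_field]
    exact ⟨(le_div_iff₀ h0).2 h1, (div_le_iff₀ h0).2 h2⟩
  have htend := (hasDerivAt_iff_tendsto_slope.1 hi).mono_left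
    (nhdsWithin_mono s (fun r (hr : r ∈ Set.Ioi s) => ne_of_gt hr))
  exact isClosed_Icc.mem_of_tendsto htend hev

lemma ctrlFeasibleN_iff {n : ℕ} {a b : Fin n → ℝ} {t : ℝ} {y : ℝ → Fin n → ℝ}
    (ha : ∀ i, 0 < a i) (hb : ∀ i, 0 < b i) :
    ctrlFeasibleN a b t y ↔ ∀ i, SlopeBound (a i) (b i) t (fun s => y s i) :=
  ⟨fun h i => h.slopeBound i, ctrlFeasibleN_of_slopeBound ha hb⟩

/-! ### The pointwise smallest admissible trajectory -/

/-- The projection of `0` onto the interval of positions reachable at time `s` from `u` at time `0`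
and from which `x` can be reached at time `t`. It is defined for all real `s` and `u`; the
interval is nonempty when `s ∈ [0, t]` and `u ∈ [x - a t, x + b t]`. -/
def clampTraj (a b x t u s : ℝ) : ℝ :=
  max (max (u - b * s) (x - a * (t - s))) (min (min (u + a * s) (x + b * (t - s))) 0)

lemma continuous_clampTraj (a b x t : ℝ) :
    Continuous fun p : ℝ × ℝ => clampTraj a b x t p.1 p.2 := by
  unfold clampTraj
  fun_prop

lemma slopeBound_clampTraj {a b : ℝ} (ha : 0 < a) (hb : 0 < b) (x t u : ℝ) :
    SlopeBound a b t (clampTraj a b x t u) := by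
  intro s r _ hsr _
  have h1 : 0 ≤ a * (r - s) := mul_nonneg ha.le (sub_nonneg.2 hsr)
  have h2 : 0 ≤ b * (r - s) := mul_nonneg hb.le (sub_nonneg.2 hsr)
  unfold clampTraj
  constructor
  · have : max (max (u - b * s) (x - a * (t - s))) (min (min (u + a * s) (x + b * (t - s))) 0)
      ≤ max (max (u - b * r) (x - a * (t - r))) (min (min (u + a * r) (x + b * (t - r))) 0)
        + b * (r - s) := by
      rw [← max_add_add_right, ← max_add_add_right, ← min_add_add_right, ← min_add_add_right]
      refine max_le_max (max_le_max ?_ ?_) (min_le_min (min_le_min ?_ ?_) ?_) <;> linarith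
    linarith
  · have : max (max (u - b * r) (x - a * (t - r))) (min (min (u + a * r) (x + b * (t - r))) 0)
      ≤ max (max (u - b * s) (x - a * (t - s))) (min (min (u + a * s) (x + b * (t - s))) 0)
        + a * (r - s) := by
      rw [← max_add_add_right, ← max_add_add_right, ← min_add_add_right, ← min_add_add_right]
      refine max_le_max (max_le_max ?_ ?_) (min_le_min (min_le_min ?_ ?_) ?_) <;> linarith
    linarith

/-- The reflection used to define `γ` and `V` for `u < 0` commutes with the projection. This needs
the interval to be nonempty: otherwise `max L (min U 0)` is not symmetric in `L` and `U`. -/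
lemma clampTraj_neg {a b x t u s : ℝ} (ha : 0 < a) (hb : 0 < b)
    (hu : u ∈ Set.Icc (x - a * t) (x + b * t)) (hs : s ∈ Set.Icc 0 t) :
    clampTraj b a (-x) t (-u) s = -clampTraj a b x t u s := by
  have h1 : 0 ≤ a * s := mul_nonneg ha.le hs.1
  have h2 : 0 ≤ b * s := mul_nonneg hb.le hs.1
  have h3 : 0 ≤ a * (t - s) := mul_nonneg ha.le (sub_nonneg.2 hs.2)
  have h4 : 0 ≤ b * (t - s) := mul_nonneg hb.le (sub_nonneg.2 hs.2)
  have hLU : max (u - b * s) (x - a * (t - s)) ≤ min (u + a * s) (x + b * (t - s)) := by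
    refine max_le (le_min ?_ ?_) (le_min ?_ ?_) <;> linarith [hu.1, hu.2]
  have e1 : max (-u - a * s) (-x - b * (t - s)) = -min (u + a * s) (x + b * (t - s)) := by
    rw [← max_neg_neg]; congr 1 <;> ring
  have e2 : min (-u + b * s) (-x + a * (t - s)) = -max (u - b * s) (x - a * (t - s)) := by
    rw [← min_neg_neg]; congr 1 <;> ring
  unfold clampTraj
  rw [e1, e2]
  generalize max (u - b * s) (x - a * (t - s)) = L at hLU ⊢
  generalize min (u + a * s) (x + b * (t - s)) = U at hLU ⊢
  grind

/-- Among admissible trajectories with given endpoints, `clampTraj` is smallest in absolute value at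
every time. -/
lemma sq_clampTraj_le {a b t : ℝ} {y : ℝ → ℝ} (hy : SlopeBound a b t y) {s : ℝ}
    (hs : s ∈ Set.Icc 0 t) : clampTraj a b (y t) t (y 0) s ^ 2 ≤ y s ^ 2 := by
  obtain ⟨h1, h2⟩ := hy 0 s le_rfl hs.1 hs.2
  obtain ⟨h3, h4⟩ := hy s t hs.1 hs.2 le_rfl
  have hL : max (y 0 - b * s) (y t - a * (t - s)) ≤ y s := max_le (by linarith) (by linarith)
  have hU : y s ≤ min (y 0 + a * s) (y t + b * (t - s)) := le_min (by linarith) (by linarith)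
  rw [sq_le_sq]
  unfold clampTraj
  generalize max (y 0 - b * s) (y t - a * (t - s)) = L at hL ⊢
  generalize min (y 0 + a * s) (y t + b * (t - s)) = U at hU ⊢
  grind

/-! ### Closed form of the trajectory -/

section Pieces

variable {a b x t u s : ℝ}

lemma clampTraj_eq_left (h : x - a * (t - s) ≤ u - b * s) (h0 : 0 ≤ u - b * s) :
    clampTraj a b x t u s = u - b * s := by
  unfold clampTraj
  rw [max_eq_left h, max_eq_left ((min_le_right _ _).trans h0)]

lemma clampTraj_eq_right (h : u - b * s ≤ x - a * (t - s)) (h0 : 0 ≤ x - a * (t - s)) :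
    clampTraj a b x t u s = a * (s - t) + x := by
  unfold clampTraj
  rw [max_eq_right h, max_eq_left ((min_le_right _ _).trans h0)]
  ring

lemma clampTraj_eq_zero (h1 : u - b * s ≤ 0) (h2 : x - a * (t - s) ≤ 0)
    (h3 : 0 ≤ u + a * s) (h4 : 0 ≤ x + b * (t - s)) : clampTraj a b x t u s = 0 := by
  unfold clampTraj
  rw [min_eq_right (le_min h3 h4), max_eq_right (max_le h1 h2)]

lemma clampTraj_eq_top (h0 : x + b * (t - s) ≤ 0) (h1 : u - b * s ≤ x + b * (t - s))
    (h2 : x - a * (t - s) ≤ x + b * (t - s)) (h3 : x + b * (t - s) ≤ u + a * s) :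
    clampTraj a b x t u s = -b * (s - t) + x := by
  unfold clampTraj
  rw [min_eq_right h3, min_eq_left h0, max_eq_right (max_le h1 h2)]
  ring

/-- On `Ω₁` the descending and ascending pieces meet at a nonnegative height. -/
lemma inOmega1.crossing_nonneg (ha : 0 < a) (hb : 0 < b) (h : inOmega1 a b x t u) :
    0 ≤ a * u + b * x - a * b * t := by
  obtain ⟨hu, ht, h | h⟩ := h
  · obtain ⟨h1, h2, h3⟩ := h
    rw [lt_div_iff₀ hb] at h1
    have h4 : 0 ≤ a * (u - t * b) := mul_nonneg ha.le (by linarith)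
    have h5 : 0 ≤ b * x := mul_nonneg hb.le (by linarith)
    linarith
  · obtain ⟨h1, h2, h3⟩ := h
    have h4 := mul_le_mul_of_nonneg_left h2 hb.le
    have h5 : b * (a * t - a * u / b) = a * b * t - a * u := by field_simp
    linarith

lemma clampTraj_omega1_left (ha : 0 < a) (hb : 0 < b) (h : inOmega1 a b x t u)
    (hs : s ≤ (-x + u + a * t) / (a + b)) : clampTraj a b x t u s = u - b * s := by
  have hc := h.crossing_nonneg ha hb
  have hab : 0 < a + b := add_pos ha hb
  rw [le_div_iff₀ hab] at hs
  refine clampTraj_eq_left (by linarith) ?_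
  have := mul_le_mul_of_nonneg_left hs hb.le
  refine nonneg_of_mul_nonneg_right (a := a + b) ?_ hab
  linarith

lemma clampTraj_omega1_right (ha : 0 < a) (hb : 0 < b) (h : inOmega1 a b x t u)
    (hs : (-x + u + a * t) / (a + b) ≤ s) : clampTraj a b x t u s = a * (s - t) + x := by
  have hc := h.crossing_nonneg ha hb
  have hab : 0 < a + b := add_pos ha hb
  rw [div_le_iff₀ hab] at hs
  refine clampTraj_eq_right (by linarith) ?_
  have := mul_le_mul_of_nonneg_left hs ha.le
  refine nonneg_of_mul_nonneg_right (a := a + b) ?_ hab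
  linarith

lemma inOmega2.lt_sub (ha : 0 < a) (hb : 0 < b) (h : inOmega2 a b x t u) :
    u / b < t - x / a := by
  obtain ⟨hu, ht, h1, h2, h3⟩ := h
  have h4 : x / a < t - u / b := by
    rw [div_lt_iff₀ ha]
    calc x < a * t - a * u / b := h3
      _ = (t - u / b) * a := by ring
  linarith

lemma clampTraj_omega2_left (ha : 0 < a) (hb : 0 < b) (h : inOmega2 a b x t u)
    (hs : s ≤ u / b) : clampTraj a b x t u s = u - b * s := by
  have h1 : s ≤ t - x / a := hs.trans (h.lt_sub ha hb).le
  rw [le_sub_comm, div_le_iff₀ ha] at h1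
  rw [le_div_iff₀ hb] at hs
  exact clampTraj_eq_left (by linarith) (by linarith)

lemma clampTraj_omega2_mid (ha : 0 < a) (hb : 0 < b) (h : inOmega2 a b x t u)
    (hs : u / b ≤ s) (hs' : s ≤ t - x / a) : clampTraj a b x t u s = 0 := by
  have h1 := hs'
  have h0 : 0 ≤ s := (div_nonneg h.1 hb.le).trans hs
  have h2 : 0 ≤ t - s := by linarith [div_nonneg h.2.2.2.1 ha.le]
  rw [le_sub_comm, div_le_iff₀ ha] at h1
  rw [div_le_iff₀ hb] at hs
  exact clampTraj_eq_zero (by linarith) (by linarith)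
    (add_nonneg h.1 (mul_nonneg ha.le h0)) (add_nonneg h.2.2.2.1 (mul_nonneg hb.le h2))

lemma clampTraj_omega2_right (ha : 0 < a) (hb : 0 < b) (h : inOmega2 a b x t u)
    (hs : t - x / a ≤ s) : clampTraj a b x t u s = a * (s - t) + x := by
  have h1 : u / b ≤ s := (h.lt_sub ha hb).le.trans hs
  rw [sub_le_comm, le_div_iff₀ ha] at hs
  rw [div_le_iff₀ hb] at h1
  exact clampTraj_eq_right (by linarith) (by linarith)

lemma inOmega3.le_sub (hb : 0 < b) (h : inOmega3 a b x t u) : u / b ≤ t - |x| / b := by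
  obtain ⟨hu, ht, h1, h2, h3⟩ := h
  rw [abs_of_neg h3, le_sub_iff_add_le, ← add_div, div_le_iff₀ hb]
  linarith

lemma clampTraj_omega3_left (ha : 0 < a) (hb : 0 < b) (h : inOmega3 a b x t u)
    (hs : s ≤ u / b) : clampTraj a b x t u s = u - b * s := by
  have h1 : 0 ≤ a * (t - s) := mul_nonneg ha.le (by linarith [h.2.2.1])
  rw [le_div_iff₀ hb] at hs
  exact clampTraj_eq_left (by linarith [h.2.2.2.2]) (by linarith)

lemma clampTraj_omega3_mid (ha : 0 < a) (hb : 0 < b) (h : inOmega3 a b x t u)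
    (hs : u / b ≤ s) (hs' : s ≤ t - |x| / b) : clampTraj a b x t u s = 0 := by
  have h0 : 0 ≤ s := (div_nonneg h.1 hb.le).trans hs
  have h2 : 0 ≤ t - s := by linarith [div_nonneg (abs_nonneg x) hb.le]
  have h3 := mul_nonneg ha.le h2
  have hx := h.2.2.2.2
  rw [le_sub_comm, div_le_iff₀ hb, abs_of_neg hx] at hs'
  rw [div_le_iff₀ hb] at hs
  exact clampTraj_eq_zero (by linarith) (by linarith)
    (add_nonneg h.1 (mul_nonneg ha.le h0)) (by linarith)

lemma clampTraj_omega3_right (ha : 0 < a) (hb : 0 < b) (h : inOmega3 a b x t u)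
    (hs : t - |x| / b ≤ s) (hst : s ≤ t) : clampTraj a b x t u s = -b * (s - t) + x := by
  have h0 : 0 ≤ s := (div_nonneg h.1 hb.le).trans ((h.le_sub hb).trans hs)
  have hx := h.2.2.2.2
  have hux := h.2.2.2.1
  have h3 := mul_nonneg ha.le (sub_nonneg.2 hst)
  have h4 := mul_nonneg hb.le (sub_nonneg.2 hst)
  have h5 := mul_nonneg ha.le h0
  rw [sub_le_comm, le_div_iff₀ hb, abs_of_neg hx] at hs
  exact clampTraj_eq_top (by linarith) (by linarith) (by linarith) (by linarith [h.1])

lemma omega_cases (hb : 0 < b) (ht : 0 < t) (hu0 : 0 ≤ u)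
    (hu : u ∈ Set.Icc (x - a * t) (x + b * t)) :
    inOmega1 a b x t u ∨ inOmega2 a b x t u ∨ inOmega3 a b x t u := by
  obtain ⟨h1, h2⟩ := hu
  rcases lt_or_ge t (u / b) with h | h
  · exact Or.inl ⟨hu0, ht.le, Or.inl ⟨h, by linarith, by linarith⟩⟩
  rcases lt_or_ge x 0 with hx | hx
  · exact Or.inr (Or.inr ⟨hu0, ht.le, h, by linarith, hx⟩)
  rcases lt_or_ge x (a * t - a * u / b) with hx' | hx'
  · exact Or.inr (Or.inl ⟨hu0, ht.le, h, hx, hx'⟩)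
  · exact Or.inl ⟨hu0, ht.le, Or.inr ⟨h, hx', by linarith⟩⟩

lemma gammaPos_eq_clampTraj (ha : 0 < a) (hb : 0 < b) (ht : 0 < t) (hu0 : 0 ≤ u)
    (hu : u ∈ Set.Icc (x - a * t) (x + b * t)) (hs : s ∈ Set.Icc 0 t) :
    gammaPos a b x t u s = clampTraj a b x t u s := by
  unfold gammaPos
  split_ifs with h1 h2 h3
  · unfold gamma1
    split_ifs with h
    · exact (clampTraj_omega1_left ha hb h1 h.le).symm
    · exact (clampTraj_omega1_right ha hb h1 (not_lt.1 h)).symm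
  · unfold gamma2
    split_ifs with h h'
    · exact (clampTraj_omega2_left ha hb h2 h.le).symm
    · exact (clampTraj_omega2_mid ha hb h2 (not_lt.1 h) h'.le).symm
    · exact (clampTraj_omega2_right ha hb h2 (not_lt.1 h')).symm
  · unfold gamma3
    split_ifs with h h'
    · exact (clampTraj_omega3_left ha hb h3 h.le).symm
    · exact (clampTraj_omega3_mid ha hb h3 (not_lt.1 h) h'.le).symm
    · exact (clampTraj_omega3_right ha hb h3 (not_lt.1 h') hs.2).symm
  · have := omega_cases hb ht hu0 hu
    tauto

lemma neg_mem_box (hu : u ∈ Set.Icc (x - a * t) (x + b * t)) :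
    -u ∈ Set.Icc (-x - b * t) (-x + a * t) :=
  ⟨by linarith [hu.2], by linarith [hu.1]⟩

lemma gammaFn_eq_clampTraj (ha : 0 < a) (hb : 0 < b) (ht : 0 < t)
    (hu : u ∈ Set.Icc (x - a * t) (x + b * t)) (hs : s ∈ Set.Icc 0 t) :
    gammaFn a b x t u s = clampTraj a b x t u s := by
  unfold gammaFn
  split_ifs with h
  · exact gammaPos_eq_clampTraj ha hb ht h hu hs
  · rw [gammaPos_eq_clampTraj hb ha ht (by linarith) (neg_mem_box hu) hs,
      clampTraj_neg ha hb hu hs, neg_neg]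

lemma clampTraj_zero (ha : 0 < a) (hb : 0 < b) (ht : 0 < t)
    (hu : u ∈ Set.Icc (x - a * t) (x + b * t)) : clampTraj a b x t u 0 = u := by
  have h1 := mul_pos ha ht
  have h2 := mul_pos hb ht
  unfold clampTraj
  rw [max_eq_left (a := u - b * 0) (by linarith [hu.1]),
    min_eq_left (a := u + a * 0) (by linarith [hu.2])]
  simp

lemma clampTraj_end (ha : 0 < a) (hb : 0 < b) (ht : 0 < t)
    (hu : u ∈ Set.Icc (x - a * t) (x + b * t)) : clampTraj a b x t u t = x := by
  have h1 := mul_pos ha ht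
  have h2 := mul_pos hb ht
  unfold clampTraj
  rw [max_eq_right (a := u - b * t) (by linarith [hu.2]),
    min_eq_right (a := u + a * t) (by linarith [hu.1])]
  simp

/-! ### The running cost of the trajectory -/

lemma integral_affine_sq {f : ℝ → ℝ} {p q α β : ℝ} (hq : q ≠ 0) (hαβ : α ≤ β)
    (hf : ∀ s ∈ Set.Icc α β, f s = p + q * s) :
    ∫ s in α..β, f s ^ 2 / 2 = ((p + q * β) ^ 3 - (p + q * α) ^ 3) / (6 * q) := by
  have h1 : ∫ s in α..β, f s ^ 2 / 2 = ∫ s in α..β, (p + q * s) ^ 2 / 2 := by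
    refine intervalIntegral.integral_congr fun s hs => ?_
    rw [Set.uIcc_of_le hαβ] at hs
    simp only [hf s hs]
  rw [h1, intervalIntegral.integral_eq_sub_of_hasDerivAt
    (f := fun s => (p + q * s) ^ 3 / (6 * q))]
  · ring
  · intro s _
    have h2 : HasDerivAt (fun s : ℝ => p + q * s) q s := by
      simpa using ((hasDerivAt_id s).const_mul q).const_add p
    refine ((h2.fun_pow 3).div_const (6 * q)).congr_deriv ?_
    field_simp
    norm_num
    ring
  · exact Continuous.intervalIntegrable (by fun_prop) _ _

lemma integral_zero_sq {f : ℝ → ℝ} {α β : ℝ} (hαβ : α ≤ β) (hf : ∀ s ∈ Set.Icc α β, f s = 0) :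
    ∫ s in α..β, f s ^ 2 / 2 = 0 := by
  have h1 : ∫ s in α..β, f s ^ 2 / 2 = ∫ s in α..β, (0 : ℝ) := by
    refine intervalIntegral.integral_congr fun s hs => ?_
    rw [Set.uIcc_of_le hαβ] at hs
    simp [hf s hs]
  simpa using h1

lemma intervalIntegrable_clampTraj (a b x t u α β : ℝ) :
    IntervalIntegrable (fun s => clampTraj a b x t u s ^ 2 / 2) volume α β := by
  refine Continuous.intervalIntegrable ?_ _ _
  unfold clampTraj
  fun_prop

lemma integral_omega1 (ha : 0 < a) (hb : 0 < b) (hu : u ∈ Set.Icc (x - a * t) (x + b * t))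
    (h : inOmega1 a b x t u) : ∫ s in (0:ℝ)..t, clampTraj a b x t u s ^ 2 / 2 = V1fun a b x t u := by
  have hab : 0 < a + b := add_pos ha hb
  have hc0 : 0 ≤ (-x + u + a * t) / (a + b) := div_nonneg (by linarith [hu.1]) hab.le
  have hct : (-x + u + a * t) / (a + b) ≤ t := by
    rw [div_le_iff₀ hab]; linarith [hu.2]
  rw [← intervalIntegral.integral_add_adjacent_intervals
    (intervalIntegrable_clampTraj a b x t u 0 ((-x + u + a * t) / (a + b)))
    (intervalIntegrable_clampTraj a b x t u _ t),
    integral_affine_sq (p := u) (q := -b) (neg_ne_zero.2 hb.ne') hc0 (fun s hs => by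
      rw [clampTraj_omega1_left ha hb h hs.2]; ring),
    integral_affine_sq (p := x - a * t) (q := a) ha.ne' hct (fun s hs => by
      rw [clampTraj_omega1_right ha hb h hs.1]; ring)]
  have e1 : u + -b * ((-x + u + a * t) / (a + b)) = (a * u + b * x - a * b * t) / (a + b) := by
    field_simp; ring
  have e2 : x - a * t + a * ((-x + u + a * t) / (a + b))
      = (a * u + b * x - a * b * t) / (a + b) := by
    field_simp; ring
  rw [e1, e2]
  unfold V1fun
  generalize (a * u + b * x - a * b * t) / (a + b) = w
  field_simp
  ring

lemma integral_omega2 (ha : 0 < a) (hb : 0 < b) (h : inOmega2 a b x t u) :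
    ∫ s in (0:ℝ)..t, clampTraj a b x t u s ^ 2 / 2 = V2fun a b x t u := by
  have h0 : 0 ≤ u / b := div_nonneg h.1 hb.le
  have h1 := (h.lt_sub ha hb).le
  have h2 : t - x / a ≤ t := by linarith [div_nonneg h.2.2.2.1 ha.le]
  rw [← intervalIntegral.integral_add_adjacent_intervals
    (intervalIntegrable_clampTraj a b x t u 0 (t - x / a))
    (intervalIntegrable_clampTraj a b x t u _ t),
    ← intervalIntegral.integral_add_adjacent_intervals
    (intervalIntegrable_clampTraj a b x t u 0 (u / b))
    (intervalIntegrable_clampTraj a b x t u _ (t - x / a)),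
    integral_affine_sq (p := u) (q := -b) (neg_ne_zero.2 hb.ne') h0 (fun s hs => by
      rw [clampTraj_omega2_left ha hb h hs.2]; ring),
    integral_zero_sq h1 (fun s hs => clampTraj_omega2_mid ha hb h hs.1 hs.2),
    integral_affine_sq (p := x - a * t) (q := a) ha.ne' h2 (fun s hs => by
      rw [clampTraj_omega2_right ha hb h hs.1]; ring)]
  have e1 : u + -b * (u / b) = 0 := by field_simp; ring
  have e2 : x - a * t + a * (t - x / a) = 0 := by field_simp; ring
  rw [e1, e2]
  unfold V2fun
  field_simp
  ring

lemma integral_omega3 (ha : 0 < a) (hb : 0 < b) (h : inOmega3 a b x t u) :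
    ∫ s in (0:ℝ)..t, clampTraj a b x t u s ^ 2 / 2 = V3fun a b x t u := by
  have h0 : 0 ≤ u / b := div_nonneg h.1 hb.le
  have h1 := h.le_sub hb
  have h2 : t - |x| / b ≤ t := by linarith [div_nonneg (abs_nonneg x) hb.le]
  rw [← intervalIntegral.integral_add_adjacent_intervals
    (intervalIntegrable_clampTraj a b x t u 0 (t - |x| / b))
    (intervalIntegrable_clampTraj a b x t u _ t),
    ← intervalIntegral.integral_add_adjacent_intervals
    (intervalIntegrable_clampTraj a b x t u 0 (u / b))
    (intervalIntegrable_clampTraj a b x t u _ (t - |x| / b)),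
    integral_affine_sq (p := u) (q := -b) (neg_ne_zero.2 hb.ne') h0 (fun s hs => by
      rw [clampTraj_omega3_left ha hb h hs.2]; ring),
    integral_zero_sq h1 (fun s hs => clampTraj_omega3_mid ha hb h hs.1 hs.2),
    integral_affine_sq (p := x + b * t) (q := -b) (neg_ne_zero.2 hb.ne') h2 (fun s hs => by
      rw [clampTraj_omega3_right ha hb h hs.1 hs.2]; ring)]
  have e1 : u + -b * (u / b) = 0 := by field_simp; ring
  have e2 : x + b * t + -b * (t - |x| / b) = 0 := by
    rw [abs_of_neg h.2.2.2.2]; field_simp; ring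
  rw [e1, e2]
  unfold V3fun
  field_simp
  ring

lemma Vpos_eq_integral (ha : 0 < a) (hb : 0 < b) (ht : 0 < t) (hu0 : 0 ≤ u)
    (hu : u ∈ Set.Icc (x - a * t) (x + b * t)) :
    Vpos a b x t u = ((∫ s in (0:ℝ)..t, clampTraj a b x t u s ^ 2 / 2 : ℝ) : EReal) := by
  unfold Vpos
  split_ifs with h1 h2 h3
  · rw [integral_omega1 ha hb hu h1]
  · rw [integral_omega2 ha hb h2]
  · rw [integral_omega3 ha hb h3]
  · have := omega_cases hb ht hu0 hu
    tauto

lemma Vval_eq_integral (ha : 0 < a) (hb : 0 < b) (ht : 0 < t)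
    (hu : u ∈ Set.Icc (x - a * t) (x + b * t)) :
    Vval a b x t u = ((∫ s in (0:ℝ)..t, clampTraj a b x t u s ^ 2 / 2 : ℝ) : EReal) := by
  unfold Vval
  split_ifs with h
  · exact Vpos_eq_integral ha hb ht h hu
  · rw [Vpos_eq_integral hb ha ht (by linarith) (neg_mem_box hu)]
    congr 1
    refine intervalIntegral.integral_congr fun s hs => ?_
    rw [Set.uIcc_of_le ht.le] at hs
    simp only [clampTraj_neg ha hb hu hs, neg_sq]

end Pieces

/-! ### The separable problem -/

section Vector

variable {n : ℕ} {a b x : Fin n → ℝ} {t : ℝ}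

/-- The running cost `∫₀ᵗ ‖·‖²/2` of the componentwise projection trajectory started at `u`. -/
def runCost (a b x : Fin n → ℝ) (t : ℝ) (u : Fin n → ℝ) : ℝ :=
  ∫ s in (0:ℝ)..t, (∑ i, clampTraj (a i) (b i) (x i) t (u i) s ^ 2) / 2

lemma continuous_runCost (a b x : Fin n → ℝ) (t : ℝ) : Continuous (runCost a b x t) := by
  unfold runCost
  refine intervalIntegral.continuous_parametric_intervalIntegral_of_continuous' ?_ 0 t
  refine Continuous.div_const (continuous_finsetSum _ fun i _ => ?_) 2
  have h : Continuous fun p : (Fin n → ℝ) × ℝ => (p.1 i, p.2) := by fun_prop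
  exact ((continuous_clampTraj (a i) (b i) (x i) t).comp h).pow 2

lemma mem_boxIcc {u : Fin n → ℝ} :
    u ∈ boxIcc a b x t ↔ ∀ i, u i ∈ Set.Icc (x i - a i * t) (x i + b i * t) := by
  simp only [boxIcc, Set.mem_univ_pi]

lemma sumV_eq_integral (ha : ∀ i, 0 < a i) (hb : ∀ i, 0 < b i) (ht : 0 < t) {u : Fin n → ℝ}
    (hu : u ∈ boxIcc a b x t) : sumV a b x t u = ((runCost a b x t u : ℝ) : EReal) := by
  rw [mem_boxIcc] at hu
  have h1 : runCost a b x t u =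
      ∑ i, ∫ s in (0:ℝ)..t, clampTraj (a i) (b i) (x i) t (u i) s ^ 2 / 2 := by
    unfold runCost
    simp only [Finset.sum_div]
    exact intervalIntegral.integral_finsetSum fun i _ => intervalIntegrable_clampTraj _ _ _ _ _ _ _
  have h2 : ∀ f : Fin n → ℝ, ((∑ i, f i : ℝ) : EReal) = ∑ i, (f i : EReal) := fun f =>
    map_sum (⟨⟨Real.toEReal, EReal.coe_zero⟩, EReal.coe_add⟩ : ℝ →+ EReal) f Finset.univ
  rw [h1, h2]
  exact Finset.sum_congr rfl fun i _ => Vval_eq_integral (ha i) (hb i) ht (hu i)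

lemma gammaVec_apply (ha : ∀ i, 0 < a i) (hb : ∀ i, 0 < b i) (ht : 0 < t) {u : Fin n → ℝ}
    (hu : u ∈ boxIcc a b x t) {s : ℝ} (hs : s ∈ Set.Icc 0 t) (i : Fin n) :
    gammaVec a b x t u s i = clampTraj (a i) (b i) (x i) t (u i) s :=
  gammaFn_eq_clampTraj (ha i) (hb i) ht (mem_boxIcc.1 hu i) hs

lemma gammaVec_feasible (ha : ∀ i, 0 < a i) (hb : ∀ i, 0 < b i) (ht : 0 < t) {u : Fin n → ℝ}
    (hu : u ∈ boxIcc a b x t) : ctrlFeasibleN a b t (gammaVec a b x t u) := by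
  refine (ctrlFeasibleN_iff ha hb).2 fun i s r hs hsr hrt => ?_
  simp only
  rw [gammaVec_apply ha hb ht hu ⟨hs, hsr.trans hrt⟩, gammaVec_apply ha hb ht hu ⟨hs.trans hsr, hrt⟩]
  exact slopeBound_clampTraj (ha i) (hb i) _ _ _ s r hs hsr hrt

lemma gammaVec_end (ha : ∀ i, 0 < a i) (hb : ∀ i, 0 < b i) (ht : 0 < t) {u : Fin n → ℝ}
    (hu : u ∈ boxIcc a b x t) : gammaVec a b x t u t = x := by
  funext i
  rw [gammaVec_apply ha hb ht hu ⟨ht.le, le_rfl⟩]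
  exact clampTraj_end (ha i) (hb i) ht (mem_boxIcc.1 hu i)

lemma costN_gammaVec (ha : ∀ i, 0 < a i) (hb : ∀ i, 0 < b i) (ht : 0 < t)
    (Φ : (Fin n → ℝ) → ℝ) {u : Fin n → ℝ} (hu : u ∈ boxIcc a b x t) :
    costN t Φ (gammaVec a b x t u) = runCost a b x t u + Φ u := by
  unfold costN runCost
  congr 1
  · refine intervalIntegral.integral_congr fun s hs => ?_
    rw [Set.uIcc_of_le ht.le] at hs
    simp only [gammaVec_apply ha hb ht hu hs]
  · congr 1
    funext i
    rw [gammaVec_apply ha hb ht hu ⟨le_rfl, ht.le⟩]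
    exact clampTraj_zero (ha i) (hb i) ht (mem_boxIcc.1 hu i)

lemma ctrlFeasibleN.continuousOn {y : ℝ → Fin n → ℝ} (hy : ctrlFeasibleN a b t y) :
    ContinuousOn y (Set.Icc 0 t) := by
  obtain ⟨⟨K, hK⟩, _⟩ := hy
  exact hK.continuousOn

lemma continuousOn_normSq {y : ℝ → Fin n → ℝ} (hy : ContinuousOn y (Set.Icc 0 t)) (c : ℝ) :
    ContinuousOn (fun s => (∑ i, y s i ^ 2) / c) (Set.Icc 0 t) :=
  (continuousOn_finsetSum _ fun i _ => ((continuous_apply i).comp_continuousOn hy).pow 2).div_const c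

lemma ctrlFeasibleN.start_mem_boxIcc (ht : 0 < t) {y : ℝ → Fin n → ℝ}
    (hy : ctrlFeasibleN a b t y) (hyt : y t = x) : y 0 ∈ boxIcc a b x t := by
  rw [mem_boxIcc]
  intro i
  obtain ⟨h1, h2⟩ := hy.slopeBound i 0 t le_rfl ht.le le_rfl
  simp only [hyt] at h1 h2
  exact ⟨by linarith, by linarith⟩

lemma runCost_le_costN (ht : 0 < t) (Φ : (Fin n → ℝ) → ℝ) {y : ℝ → Fin n → ℝ}
    (hy : ctrlFeasibleN a b t y) (hyt : y t = x) :
    runCost a b x t (y 0) + Φ (y 0) ≤ costN t Φ y := by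
  unfold costN runCost
  gcongr
  refine intervalIntegral.integral_mono_on ht.le ?_ ?_ fun s hs => ?_
  · refine Continuous.intervalIntegrable ?_ _ _
    unfold clampTraj
    fun_prop
  · refine ContinuousOn.intervalIntegrable ?_
    rw [Set.uIcc_of_le ht.le]
    exact continuousOn_normSq hy.continuousOn 2
  · refine div_le_div_of_nonneg_right (Finset.sum_le_sum fun i _ => ?_) two_pos.le
    have := sq_clampTraj_le (hy.slopeBound i) hs
    simpa only [hyt] using this

/-- The midpoint of two admissible trajectories. -/
def midTraj (y z : ℝ → Fin n → ℝ) (s : ℝ) : Fin n → ℝ := fun i => (y s i + z s i) / 2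

lemma midTraj_feasible (ha : ∀ i, 0 < a i) (hb : ∀ i, 0 < b i) {y z : ℝ → Fin n → ℝ}
    (hy : ctrlFeasibleN a b t y) (hz : ctrlFeasibleN a b t z) :
    ctrlFeasibleN a b t (midTraj y z) := by
  refine (ctrlFeasibleN_iff ha hb).2 fun i s r hs hsr hrt => ?_
  obtain ⟨h1, h2⟩ := hy.slopeBound i s r hs hsr hrt
  obtain ⟨h3, h4⟩ := hz.slopeBound i s r hs hsr hrt
  simp only [midTraj] at *
  exact ⟨by linarith, by linarith⟩

/-- The parallelogram identity for the running cost, together with convexity of `Φ`. -/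
lemma costN_midTraj_le (ht : 0 < t) {Φ : (Fin n → ℝ) → ℝ} (hΦ : ConvexOn ℝ Set.univ Φ)
    {y z : ℝ → Fin n → ℝ} (hy : ContinuousOn y (Set.Icc 0 t)) (hz : ContinuousOn z (Set.Icc 0 t)) :
    costN t Φ (midTraj y z) + ∫ s in (0:ℝ)..t, (∑ i, (y s - z s) i ^ 2) / 8
      ≤ (costN t Φ y + costN t Φ z) / 2 := by
  have hii : ∀ {w : ℝ → Fin n → ℝ} (c : ℝ), ContinuousOn w (Set.Icc 0 t) →
      IntervalIntegrable (fun s => (∑ i, w s i ^ 2) / c) volume 0 t := fun c hw =>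
    ContinuousOn.intervalIntegrable (by
      rw [Set.uIcc_of_le ht.le]; exact continuousOn_normSq hw c)
  have hm : ContinuousOn (midTraj y z) (Set.Icc 0 t) := by
    refine continuousOn_pi.2 fun i => ContinuousOn.div_const (ContinuousOn.add ?_ ?_) 2
    · exact (continuous_apply i).comp_continuousOn hy
    · exact (continuous_apply i).comp_continuousOn hz
  have hpar : (∫ s in (0:ℝ)..t, (∑ i, midTraj y z s i ^ 2) / 2)
      + ∫ s in (0:ℝ)..t, (∑ i, (y s - z s) i ^ 2) / 8
      = ((∫ s in (0:ℝ)..t, (∑ i, y s i ^ 2) / 2) + ∫ s in (0:ℝ)..t, (∑ i, z s i ^ 2) / 2) / 2 := by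
    rw [← intervalIntegral.integral_add (hii 2 hm) (hii (w := fun s => y s - z s) 8 (hy.sub hz)),
      ← intervalIntegral.integral_add (hii 2 hy) (hii 2 hz), ← intervalIntegral.integral_div]
    refine intervalIntegral.integral_congr fun s _ => ?_
    simp only [Finset.sum_div, ← Finset.sum_add_distrib]
    refine Finset.sum_congr rfl fun i _ => ?_
    simp only [midTraj, Pi.sub_apply]
    ring
  have hc : Φ (midTraj y z 0) ≤ (Φ (y 0) + Φ (z 0)) / 2 := by
    have h1 := hΦ.2 (Set.mem_univ (y 0)) (Set.mem_univ (z 0))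
      (show (0:ℝ) ≤ 1 / 2 by norm_num) (show (0:ℝ) ≤ 1 / 2 by norm_num) (by norm_num)
    have h2 : (1 / 2 : ℝ) • y 0 + (1 / 2 : ℝ) • z 0 = midTraj y z 0 := by
      funext i
      simp only [midTraj, Pi.add_apply, Pi.smul_apply, smul_eq_mul]
      ring
    rw [h2, smul_eq_mul, smul_eq_mul] at h1
    linarith
  unfold costN
  linarith

lemma eqOn_of_integral_le_zero (ht : 0 < t) {y z : ℝ → Fin n → ℝ}
    (hy : ContinuousOn y (Set.Icc 0 t)) (hz : ContinuousOn z (Set.Icc 0 t))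
    (h : ∫ s in (0:ℝ)..t, (∑ i, (y s - z s) i ^ 2) / 8 ≤ 0) : Set.EqOn y z (Set.Icc 0 t) := by
  intro s hs
  have hnn : ∀ s, 0 ≤ (∑ i, (y s - z s) i ^ 2) / 8 := fun s =>
    div_nonneg (Finset.sum_nonneg fun i _ => sq_nonneg _) (by norm_num)
  have h0 : (∑ i, (y s - z s) i ^ 2) / 8 = 0 := by
    by_contra hne
    refine absurd h (not_le.2 ?_)
    exact intervalIntegral.integral_pos ht (continuousOn_normSq (hy.sub hz) 8)
      (fun r _ => hnn r) ⟨s, hs, lt_of_le_of_ne (hnn s) (Ne.symm hne)⟩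
  have h1 : ∑ i, (y s - z s) i ^ 2 = 0 := by linarith
  funext i
  have h2 := (Finset.sum_eq_zero_iff_of_nonneg fun i _ => sq_nonneg _).1 h1 i (Finset.mem_univ i)
  exact sub_eq_zero.1 (pow_eq_zero_iff two_ne_zero |>.1 h2)

end Vector

/-- the separable high-dimensional Lax-Oleinik-type formula.
(i) the infimum of `u ↦ ∑ᵢ V(xᵢ,t;uᵢ,aᵢ,bᵢ) + Φ(u)` over `∏ᵢ [xᵢ-aᵢt, xᵢ+bᵢt]` is
attained; (ii) for any minimizer `u₀`, the componentwise trajectory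
`s ↦ (γ(s;xᵢ,t,u₀ᵢ,aᵢ,bᵢ))ᵢ` is feasible with terminal value `x`, minimizes
`∫₀ᵗ ‖y(s)‖²/2 ds + Φ(y 0)` over all feasible `y` with `y t = x`, and its cost equals
the infimum; (iii) if `Φ` is convex, this optimal trajectory is unique. -/
theorem laxOleinik_separable_hd {n : ℕ} (a b : Fin n → ℝ)
    (ha : ∀ i, 0 < a i) (hb : ∀ i, 0 < b i)
    (Φ : (Fin n → ℝ) → ℝ) (hΦ : LowerSemicontinuous Φ)
    (x : Fin n → ℝ) (t : ℝ) (ht : 0 < t) :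
    -- (i) the minimizer exists
    (∃ u0 ∈ boxIcc a b x t, ∀ u ∈ boxIcc a b x t,
      sumV a b x t u0 + (Φ u0 : EReal) ≤ sumV a b x t u + (Φ u : EReal)) ∧
    -- (ii) and (iii)
    (∀ u0 ∈ boxIcc a b x t,
      (∀ u ∈ boxIcc a b x t,
        sumV a b x t u0 + (Φ u0 : EReal) ≤ sumV a b x t u + (Φ u : EReal)) →
      -- the trajectory is feasible with terminal position x
      (ctrlFeasibleN a b t (gammaVec a b x t u0) ∧ gammaVec a b x t u0 t = x) ∧
      -- it minimizes the total cost among feasible trajectories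
      (∀ y : ℝ → Fin n → ℝ, ctrlFeasibleN a b t y → y t = x →
        costN t Φ (gammaVec a b x t u0) ≤ costN t Φ y) ∧
      -- the minimal cost equals V(x,t)
      (((costN t Φ (gammaVec a b x t u0) : ℝ) : EReal)
        = ⨅ u ∈ boxIcc a b x t, (sumV a b x t u + (Φ u : EReal))) ∧
      -- (iii) uniqueness of the optimal trajectory when Φ is convex
      (ConvexOn ℝ Set.univ Φ →
        ∀ y : ℝ → Fin n → ℝ, ctrlFeasibleN a b t y → y t = x →
          costN t Φ y = costN t Φ (gammaVec a b x t u0) →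
          ∀ s ∈ Set.Icc 0 t, y s = gammaVec a b x t u0 s)) := by
  have hobj : ∀ u ∈ boxIcc a b x t,
      sumV a b x t u + (Φ u : EReal) = ((runCost a b x t u + Φ u : ℝ) : EReal) := fun u hu => by
    rw [sumV_eq_integral ha hb ht hu, EReal.coe_add]
  refine ⟨?_, fun u0 hu0 hmin => ?_⟩
  · have hcomp : IsCompact (boxIcc a b x t) := isCompact_univ_pi fun i => isCompact_Icc
    have hne : (boxIcc a b x t).Nonempty := by
      refine ⟨x, mem_boxIcc.2 fun i => ⟨?_, ?_⟩⟩
      · linarith [mul_pos (ha i) ht]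
      · linarith [mul_pos (hb i) ht]
    have hlsc : LowerSemicontinuous fun u => runCost a b x t u + Φ u :=
      (continuous_runCost a b x t).lowerSemicontinuous.add hΦ
    obtain ⟨u0, hu0, h⟩ := (hlsc.lowerSemicontinuousOn _).exists_isMinOn hne hcomp
    refine ⟨u0, hu0, fun u hu => ?_⟩
    rw [hobj u0 hu0, hobj u hu]
    exact EReal.coe_le_coe_iff.2 (h hu)
  · have hfeas := gammaVec_feasible ha hb ht hu0
    have hopt : ∀ y : ℝ → Fin n → ℝ, ctrlFeasibleN a b t y → y t = x →
        costN t Φ (gammaVec a b x t u0) ≤ costN t Φ y := fun y hy hyt => by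
      have hy0 := hy.start_mem_boxIcc ht hyt
      have h1 := hmin (y 0) hy0
      rw [hobj u0 hu0, hobj _ hy0, EReal.coe_le_coe_iff] at h1
      rw [costN_gammaVec ha hb ht Φ hu0]
      exact h1.trans (runCost_le_costN ht Φ hy hyt)
    have hend := gammaVec_end ha hb ht hu0
    refine ⟨⟨hfeas, hend⟩, hopt, ?_, fun hconv y hy hyt hcost => ?_⟩
    · rw [costN_gammaVec ha hb ht Φ hu0, ← hobj u0 hu0]
      exact le_antisymm (le_iInf₂ hmin) (iInf₂_le u0 hu0)
    · have hmid := hopt _ (midTraj_feasible ha hb hy hfeas) (by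
        funext i
        simp only [midTraj, hyt, hend]
        ring)
      have hpar := costN_midTraj_le ht hconv hy.continuousOn hfeas.continuousOn
      exact eqOn_of_integral_le_zero ht hy.continuousOn hfeas.continuousOn (by linarith)

end
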